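/- Let $K$ be a field, $R = K[x_1,x_2,x_3,y_2,y_3]$, and let $I(G) = (x_1x_2, x_2x_3, x_1x_3, x_1y_2, y_2y_3, x_1y_3)$ be the edge ideal of two triangles joined at the vertex $x_1$. Then the projective dimension of $R/I(G)$ is exactly $4$, and the arithmetical rank of $I(G)$ is exactly $4$. -/

import Mathlib

open MvPolynomial

/-- Arithmetical rank: the least number of elements of `R` generating `I` up to radical. -/
noncomputable def araRank {R : Type} [CommRing R] (I : Ideal R) : ℕ :=
  sInf {s : ℕ | ∃ f : Fin s → R, (Ideal.span (Set.range f)).radical = I.radical}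

/-- Projective dimension of an `R`-module `M`, characterized via vanishing of the
`Ext` functors: the least `d` such that `Ext^i(M, N) = 0` for all `i > d` and all `N`. -/
noncomputable def projDim (R : Type) [CommRing R] (M : Type) [AddCommGroup M]
    [Module R M] : ℕ∞ :=
  sInf {d : ℕ∞ | ∀ i : ℕ, d < i → ∀ N : ModuleCat R,
    Subsingleton (((Ext R (ModuleCat R) i).obj (Opposite.op (ModuleCat.of R M))).obj N)}

/-- The edge ideal of two triangles joined at the vertex `x₁`, in
`R = K[x₁,x₂,x₃,y₂,y₃]` (variables `X 0, X 1, X 2, X 3, X 4`). -/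
noncomputable def twoTrianglesIdeal (K : Type) [Field K] : Ideal (MvPolynomial (Fin 5) K) :=
  Ideal.span {X 0 * X 1, X 1 * X 2, X 0 * X 2, X 0 * X 3, X 3 * X 4, X 0 * X 4}

/-!
The two triangles form the windmill graph with `n = 2` blades, and the invariants of its edge ideal
`I` are both `2n` for every `n ≥ 1`. Let `c` be the hub. Since every outer vertex is joined to `c`,
the colon ideal `(I : c)` is generated by the `2n` outer variables, whereas `I + (c)` is generated
by `c` and the `n` edges `y z` opposite to `c`. In both cases the generators are monomials with
pairwise disjoint supports, hence a regular sequence, so `0 → R/(I : c) → R/I → R/(I + (c)) → 0` has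
outer terms of projective dimension `2n` and `n + 1 ≤ 2n`, which forces projective dimension `2n` in
the middle.

Setting `c = 1` maps `I` onto the ideal of the `2n` outer variables, so Krull's height theorem
bounds the arithmetical rank below by `2n`. Conversely, each triangle is cut out up to radical by
the two elements `y z` and `c y + c z`, since `(c y)² = c y (c y + c z) - c² (y z)`.
-/

open CategoryTheory RingTheory.Sequence

section ProjDim

variable {R : Type} [CommRing R]

lemma subsingleton_ext_obj_iff (M N : ModuleCat R) (n : ℕ) :
    Subsingleton (((Ext R (ModuleCat R) (n + 1)).obj (Opposite.op M)).obj N) ↔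
      Subsingleton (Abelian.Ext M N (n + 1)) := by
  let P := projectiveResolution M
  have derived_functor :
      Subsingleton (((Ext R (ModuleCat R) (n + 1)).obj (Opposite.op M)).obj N) ↔
      ∀ f : P.complex.X (n + 1) ⟶ N, P.complex.d (n + 2) (n + 1) ≫ f = 0 →
        ∃ g : P.complex.X n ⟶ N, P.complex.d (n + 1) n ≫ g = f := by
    rw [← ModuleCat.isZero_iff_subsingleton, (P.isoExt (n + 1) N).isZero_iff,
      ← HomologicalComplex.exactAt_iff_isZero_homology,
      HomologicalComplex.exactAt_iff' _ n (n + 1) (n + 2) (by simp) (by simp),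
      ShortComplex.moduleCat_exact_iff]
    rfl
  have derived_category : Subsingleton (Abelian.Ext M N (n + 1)) ↔
      ∀ f : P.complex.X (n + 1) ⟶ N, P.complex.d (n + 2) (n + 1) ≫ f = 0 →
        ∃ g : P.complex.X n ⟶ N, P.complex.d (n + 1) n ≫ g = f := by
    constructor
    · intro h f hf
      exact (P.extMk_eq_zero_iff f (n + 2) rfl hf n rfl).1 (Subsingleton.elim _ _)
    · refine fun h ↦ subsingleton_of_forall_eq 0 fun α ↦ ?_
      obtain ⟨f, hf, rfl⟩ := P.extMk_surjective α (n + 2) rfl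
      exact (P.extMk_eq_zero_iff f (n + 2) rfl hf n rfl).2 (h f hf)
  rw [derived_functor, derived_category]

variable {M : Type} [AddCommGroup M] [Module R M]

lemma forall_subsingleton_ext_obj_iff (n : ℕ) :
    (∀ i : ℕ, n < i → ∀ N : ModuleCat R,
      Subsingleton (((Ext R (ModuleCat R) i).obj (Opposite.op (ModuleCat.of R M))).obj N)) ↔
      HasProjectiveDimensionLE (ModuleCat.of R M) n := by
  constructor
  · refine fun h ↦ HasProjectiveDimensionLT.mk fun i hi N e ↦ ?_
    obtain ⟨k, rfl⟩ : ∃ k, i = k + 1 := ⟨i - 1, by lia⟩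
    have := (subsingleton_ext_obj_iff _ _ _).1 (h (k + 1) (by lia) N)
    exact Subsingleton.elim _ _
  · intro h i hi N
    obtain ⟨k, rfl⟩ := Nat.exists_eq_add_of_lt hi
    exact (subsingleton_ext_obj_iff _ _ _).2
      (HasProjectiveDimensionLT.subsingleton _ (n + 1) _ (by lia) _)

lemma projDim_le_iff (n : ℕ) :
    projDim R M ≤ n ↔ HasProjectiveDimensionLE (ModuleCat.of R M) n := by
  rw [← forall_subsingleton_ext_obj_iff, projDim]
  refine ⟨fun h i hi ↦ ?_, fun h ↦ sInf_le fun i hi ↦ h i (by exact_mod_cast hi)⟩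
  obtain ⟨d, hd, hdi⟩ := sInf_lt_iff.1 (h.trans_lt (Nat.cast_lt.2 hi))
  exact hd i hdi

lemma coe_projDim [Nontrivial M] :
    (projDim R M : WithBot ℕ∞) = projectiveDimension (ModuleCat.of R M) := by
  have ne_bot : projectiveDimension (ModuleCat.of R M) ≠ ⊥ := by
    rw [Ne, projectiveDimension_eq_bot_iff, ModuleCat.isZero_iff_subsingleton,
      not_subsingleton_iff_nontrivial]
    assumption
  obtain ⟨d, hd⟩ := WithBot.ne_bot_iff_exists.1 ne_bot
  rw [← hd, WithBot.coe_inj]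
  refine eq_of_forall_ge_iff fun c ↦ ?_
  induction c with
  | top => simp
  | coe n =>
    rw [projDim_le_iff, ← projectiveDimension_le_iff, ← hd]
    exact WithBot.coe_le_coe

end ProjDim

section RegularSequence

universe u v

variable {R : Type u} [CommRing R]

lemma hasProjectiveDimensionLT_quotSMulTop [Small.{v} R] {M : ModuleCat.{v} R} {x : R}
    (hx : IsSMulRegular M x) {n : ℕ} (hM : HasProjectiveDimensionLT M n) :
    HasProjectiveDimensionLT (ModuleCat.of R (QuotSMulTop x M)) (n + 1) :=
  hx.smulShortComplex_shortExact.hasProjectiveDimensionLT_X₃ n hM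
    (hasProjectiveDimensionLT_of_ge M n _ n.le_succ)

lemma nontrivial_ext_quotSMulTop [Small.{v} R] {M N : ModuleCat.{v} R} {x : R}
    (hx : IsSMulRegular M x) (hN : x • 𝟙 N = 0) {n : ℕ} (hM : Nontrivial (Abelian.Ext M N n)) :
    Nontrivial (Abelian.Ext (ModuleCat.of R (QuotSMulTop x M)) N (n + 1)) := by
  by_contra! trivial_ext
  obtain ⟨e, he⟩ := exists_ne (0 : Abelian.Ext M N n)
  obtain ⟨z, rfl⟩ := Abelian.Ext.contravariant_sequence_exact₁ hx.smulShortComplex_shortExact N e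
    (add_comm 1 n) (trivial_ext.elim _ _)
  have smul_eq_zero (y : Abelian.Ext M N n) : x • y = 0 := by
    rw [← y.comp_mk₀_id, ← Abelian.Ext.comp_smul, ← Abelian.Ext.mk₀_smul, hN,
      Abelian.Ext.mk₀_zero, Abelian.Ext.comp_zero]
  have smul_id_comp (y : Abelian.Ext M N n) :
      (Abelian.Ext.mk₀ (x • 𝟙 M)).comp y (zero_add n) = x • y := by
    rw [Abelian.Ext.mk₀_smul, Abelian.Ext.smul_comp, Abelian.Ext.mk₀_id_comp]
  exact he ((smul_id_comp z).trans (smul_eq_zero z))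

lemma nontrivial_ext_of_iso {C : Type*} [Category C] [Abelian C] [HasExt.{v} C] {X X' Y : C}
    (e : X ≅ X') {n : ℕ} (hX : Nontrivial (Abelian.Ext X Y n)) :
    Nontrivial (Abelian.Ext X' Y n) :=
  have : Nontrivial (((Abelian.extFunctor n).obj (.op X)).obj Y) := hX
  let equiv := (((Abelian.extFunctor n).mapIso e.symm.op).app Y).addCommGroupIsoToAddEquiv
  equiv.symm.toEquiv.nontrivial

lemma hasProjectiveDimensionLT_quotient_ofList_smul_top [Small.{v} R] {M : ModuleCat.{v} R}
    {rs : List R} (h : IsWeaklyRegular M rs) {n : ℕ} (hM : HasProjectiveDimensionLT M n) :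
    HasProjectiveDimensionLT (ModuleCat.of R (M ⧸ Ideal.ofList rs • (⊤ : Submodule R M)))
      (n + rs.length) := by
  induction rs generalizing M n with
  | nil =>
    rw [Ideal.ofList_nil, Submodule.bot_smul]
    exact hasProjectiveDimensionLT_of_iso
      (Submodule.quotEquivOfEqBot (⊥ : Submodule R M) rfl).symm.toModuleIso n
  | cons x rs ih =>
    obtain ⟨hx, hrs⟩ := (isWeaklyRegular_cons_iff M x rs).1 h
    have := ih (M := ModuleCat.of R (QuotSMulTop x M)) hrs
      (hasProjectiveDimensionLT_quotSMulTop hx hM)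
    rw [List.length_cons, add_comm rs.length, ← add_assoc]
    exact hasProjectiveDimensionLT_of_iso
      (Submodule.quotOfListConsSMulTopEquivQuotSMulTopInner M x rs).symm.toModuleIso _

lemma nontrivial_ext_quotient_ofList_smul_top [Small.{v} R] {M N : ModuleCat.{v} R} {rs : List R}
    (h : IsWeaklyRegular M rs) (hN : ∀ x ∈ rs, x • 𝟙 N = 0) {n : ℕ}
    (hM : Nontrivial (Abelian.Ext M N n)) :
    Nontrivial (Abelian.Ext
      (ModuleCat.of R (M ⧸ Ideal.ofList rs • (⊤ : Submodule R M))) N (n + rs.length)) := by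
  induction rs generalizing M n with
  | nil =>
    rw [Ideal.ofList_nil, Submodule.bot_smul]
    exact nontrivial_ext_of_iso
      (Submodule.quotEquivOfEqBot (⊥ : Submodule R M) rfl).symm.toModuleIso hM
  | cons x rs ih =>
    obtain ⟨hx, hrs⟩ := (isWeaklyRegular_cons_iff M x rs).1 h
    obtain ⟨hxN, hrsN⟩ := List.forall_mem_cons.1 hN
    have := ih (M := ModuleCat.of R (QuotSMulTop x M)) hrs hrsN
      (nontrivial_ext_quotSMulTop hx hxN hM)
    rw [List.length_cons, add_comm rs.length, ← add_assoc]
    exact nontrivial_ext_of_iso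
      (Submodule.quotOfListConsSMulTopEquivQuotSMulTopInner M x rs).symm.toModuleIso this

lemma projectiveDimension_quotient_ofList_smul_top [Small.{v} R] {M : ModuleCat.{v} R}
    [Projective M] {rs : List R} (h : IsRegular M rs) :
    projectiveDimension (ModuleCat.of R (M ⧸ Ideal.ofList rs • (⊤ : Submodule R M))) =
      rs.length := by
  let N := ModuleCat.of R (M ⧸ Ideal.ofList rs • (⊤ : Submodule R M))
  have smul_id_eq_zero : ∀ x ∈ rs, x • 𝟙 N = 0 := fun x hx ↦ by
    refine ModuleCat.hom_ext (LinearMap.ext fun y ↦ ?_)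
    obtain ⟨y, rfl⟩ := Submodule.Quotient.mk_surjective _ y
    exact (Submodule.Quotient.mk_eq_zero _).2
      (Submodule.smul_mem_smul (Ideal.subset_span hx) Submodule.mem_top)
  have nontrivial_ext : Nontrivial (Abelian.Ext M N 0) := by
    have : Nontrivial N := h.quot_ofList_smul_nontrivial ⊤
    refine Abelian.Ext.homEquiv₀.nontrivial_congr.2
      ⟨ModuleCat.ofHom (Submodule.mkQ _), 0, fun mkQ_eq_zero ↦ ?_⟩
    obtain ⟨y, hy⟩ := exists_ne (0 : N)
    obtain ⟨y, rfl⟩ := Submodule.mkQ_surjective _ y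
    exact hy (congrArg (fun g ↦ g.hom y) mkQ_eq_zero)
  refine le_antisymm ?_ ?_
  · rw [projectiveDimension_le_iff, HasProjectiveDimensionLE, add_comm]
    exact hasProjectiveDimensionLT_quotient_ofList_smul_top h.toIsWeaklyRegular inferInstance
  · rw [projectiveDimension_ge_iff]
    intro h'
    have nontrivial_ext_length := nontrivial_ext_quotient_ofList_smul_top h.toIsWeaklyRegular
      smul_id_eq_zero nontrivial_ext
    exact not_subsingleton_iff_nontrivial.2 nontrivial_ext_length
      (h'.subsingleton _ _ _ (zero_add _).ge N)

lemma projectiveDimension_quotient_ofList {rs : List R} (h : IsRegular R rs) :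
    projectiveDimension (ModuleCat.of R (R ⧸ Ideal.ofList rs)) = rs.length := by
  have := projectiveDimension_quotient_ofList_smul_top (M := ModuleCat.of R R) h
  rwa [smul_eq_mul, Ideal.mul_top] at this

end RegularSequence

section ColonSequence

lemma projectiveDimension_X₂_eq_of_X₃_le {C : Type*} [Category C] [Abelian C]
    {S : ShortComplex C} (hS : S.ShortExact) {n : ℕ} (h₁ : projectiveDimension S.X₁ = n)
    (h₃ : projectiveDimension S.X₃ ≤ n) : projectiveDimension S.X₂ = n := by
  rw [projectiveDimension_le_iff] at h₃
  refine le_antisymm ?_ ?_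
  · rw [projectiveDimension_le_iff]
    exact hS.hasProjectiveDimensionLT_X₂ _ ((projectiveDimension_le_iff _ _).1 h₁.le) h₃
  · rw [projectiveDimension_ge_iff]
    exact fun h₂ ↦ (projectiveDimension_ge_iff _ _).1 h₁.ge
      (hS.hasProjectiveDimensionLT_X₁ n h₂ h₃)

variable {R : Type*} [CommRing R]

/-- The sequence `R ⧸ (I : f) → R ⧸ I → R ⧸ (I + (f))` of multiplication by `f` followed by the
projection. It is short exact, and compares the homological invariants of `I` with those of the
usually simpler ideals `(I : f)` and `I + (f)`. -/
noncomputable def colonShortComplex (I : Ideal R) (f : R) : ShortComplex (ModuleCat R) :=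
  ShortComplex.moduleCatMk
    (Submodule.mapQ (I.colon {f}) I (LinearMap.mulRight R f)
      fun _ hr ↦ Submodule.mem_colon_singleton.1 hr)
    (Submodule.factor (le_sup_left : I ≤ I ⊔ Ideal.span {f})) (by
      ext
      exact (Submodule.Quotient.mk_eq_zero _).2 (Ideal.mem_sup_right
        (Ideal.mul_mem_left _ _ (Ideal.mem_span_singleton_self f))))

lemma colonShortComplex_shortExact (I : Ideal R) (f : R) : (colonShortComplex I f).ShortExact where
  exact := by
    rw [ShortComplex.moduleCat_exact_iff]
    intro x hx
    obtain ⟨x, rfl⟩ := Submodule.Quotient.mk_surjective _ x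
    obtain ⟨y, hy, z, hz, rfl⟩ := Submodule.mem_sup.1 ((Submodule.Quotient.mk_eq_zero _).1 hx)
    obtain ⟨a, rfl⟩ := Ideal.mem_span_singleton'.1 hz
    refine ⟨Submodule.Quotient.mk a, (Submodule.Quotient.eq I).2 ?_⟩
    simpa using hy
  mono_f := by
    rw [ModuleCat.mono_iff_injective, injective_iff_map_eq_zero]
    intro x hx
    obtain ⟨x, rfl⟩ := Submodule.Quotient.mk_surjective _ x
    exact (Submodule.Quotient.mk_eq_zero _).2
      (Submodule.mem_colon_singleton.2 ((Submodule.Quotient.mk_eq_zero I).1 hx))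
  epi_g := by
    rw [ModuleCat.epi_iff_surjective]
    exact Submodule.factor_surjective le_sup_left

lemma projectiveDimension_quotient_eq_of_colon {I : Ideal R} {f : R} {n : ℕ}
    (hcolon : projectiveDimension (ModuleCat.of R (R ⧸ I.colon {f})) = n)
    (hsup : projectiveDimension (ModuleCat.of R (R ⧸ (I ⊔ Ideal.span {f}))) ≤ n) :
    projectiveDimension (ModuleCat.of R (R ⧸ I)) = n :=
  projectiveDimension_X₂_eq_of_X₃_le (colonShortComplex_shortExact I f) hcolon hsup

end ColonSequence

section Monomial

variable {σ K : Type*} [CommRing K]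

lemma mem_span_monomial_of_monomial_mul_mem {S : Set (σ →₀ ℕ)} {d : σ →₀ ℕ}
    (hd : ∀ s ∈ S, Disjoint d s) {p : MvPolynomial σ K}
    (hp : monomial d 1 * p ∈ Ideal.span ((fun s ↦ monomial s (1 : K)) '' S)) :
    p ∈ Ideal.span ((fun s ↦ monomial s (1 : K)) '' S) := by
  rw [mem_ideal_span_monomial_image] at hp ⊢
  intro m hm
  obtain ⟨s, hs, hsm⟩ := hp (d + m) (by simpa [mem_support_iff, coeff_monomial_mul] using hm)
  refine ⟨s, hs, fun i ↦ ?_⟩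
  have min_eq_zero : min (d i) (s i) = 0 := DFunLike.congr_fun (disjoint_iff.1 (hd s hs)) i
  have le_add : s i ≤ d i + m i := hsm i
  lia

lemma ofList_map {α R : Type*} [Semiring R] (f : α → R) (l : List α) :
    Ideal.ofList (l.map f) = Ideal.span (f '' {a | a ∈ l}) := by
  simp only [Ideal.ofList, List.mem_map, Set.image, Set.mem_ofPred_eq]

lemma ofList_map_toList_univ {α R : Type*} [Semiring R] [Fintype α] (f : α → R) :
    Ideal.ofList (Finset.univ.toList.map f) = Ideal.span (Set.range f) := by
  simp [ofList_map]

lemma isWeaklyRegular_map_monomial {l : List (σ →₀ ℕ)} (hl : l.Pairwise Disjoint) :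
    IsWeaklyRegular (MvPolynomial σ K) (l.map fun d ↦ monomial d (1 : K)) := by
  refine ⟨fun i hi ↦ ?_⟩
  rw [List.length_map] at hi
  rw [isSMulRegular_quotient_iff_mem_of_smul_mem, List.getElem_map, ← List.map_take, smul_eq_mul,
    Ideal.mul_top, ofList_map]
  intro p hp
  refine mem_span_monomial_of_monomial_mul_mem (fun s hs ↦ ?_) hp
  obtain ⟨j, hj, rfl⟩ := List.mem_take_iff_getElem.1 hs
  exact (List.pairwise_iff_getElem.1 hl j i _ _ (by lia)).symm

lemma isRegular_map_monomial [Nontrivial K] {l : List (σ →₀ ℕ)} (hl : l.Pairwise Disjoint)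
    (h0 : 0 ∉ l) : IsRegular (MvPolynomial σ K) (l.map fun d ↦ monomial d (1 : K)) := by
  refine ⟨isWeaklyRegular_map_monomial hl, ?_⟩
  rw [smul_eq_mul, Ideal.mul_top, ofList_map, ne_comm, Ideal.ne_top_iff_one,
    mem_ideal_span_monomial_image]
  intro h
  obtain ⟨s, hs, hs0⟩ := h 0 (by simp)
  exact h0 (nonpos_iff_eq_zero.1 hs0 ▸ hs)

lemma projectiveDimension_quotient_span_monomial [Nontrivial K] {ι : Type*} [Fintype ι]
    {d : ι → σ →₀ ℕ} (hd : Pairwise (Function.onFun Disjoint d)) (h0 : ∀ i, d i ≠ 0) :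
    projectiveDimension (ModuleCat.of (MvPolynomial σ K)
      (MvPolynomial σ K ⧸ Ideal.span (Set.range fun i ↦ monomial (d i) (1 : K)))) =
      Fintype.card ι := by
  have pairwise : (Finset.univ.toList.map d).Pairwise Disjoint :=
    List.pairwise_map.2 ((Finset.nodup_toList _).imp fun h ↦ hd h)
  have := projectiveDimension_quotient_ofList
    (isRegular_map_monomial (K := K) pairwise (by simpa using h0))
  rwa [List.map_map, ofList_map_toList_univ, List.length_map, Finset.length_toList] at this

lemma projectiveDimension_quotient_span_X [Nontrivial K] {ι : Type*} [Fintype ι] {v : ι → σ}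
    (hv : Function.Injective v) :
    projectiveDimension (ModuleCat.of (MvPolynomial σ K)
      (MvPolynomial σ K ⧸ Ideal.span (Set.range fun j ↦ (X (v j) : MvPolynomial σ K)))) =
      Fintype.card ι :=
  projectiveDimension_quotient_span_monomial (d := fun j ↦ Finsupp.single (v j) 1)
    (fun i j hij ↦ by simp [Function.onFun, Finsupp.disjoint_iff, hv.ne hij]) (by simp)

end Monomial

section Windmill

/-- The edge ideal of the windmill graph: the triangles `{c, v (inl i), v (inr i)}`, `i : ι`, glued
at the hub `c`. The `2 * |ι|` outer vertices are indexed by `ι ⊕ ι`; that they are distinct from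
each other and from the hub is left to the hypotheses `Function.Injective v` and `∀ j, v j ≠ c`. -/
noncomputable def windmillIdeal (K : Type*) [CommRing K] {σ ι : Type*} (c : σ) (v : ι ⊕ ι → σ) :
    Ideal (MvPolynomial σ K) :=
  ⨆ i, Ideal.span {X c * X (v (.inl i)), X c * X (v (.inr i)), X (v (.inl i)) * X (v (.inr i))}

variable {K : Type*} [CommRing K] {σ ι : Type*} {c : σ} {v : ι ⊕ ι → σ}

lemma windmillIdeal_le_iff {I : Ideal (MvPolynomial σ K)} :
    windmillIdeal K c v ≤ I ↔ (∀ j, X c * X (v j) ∈ I) ∧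
      ∀ i, X (v (.inl i)) * X (v (.inr i)) ∈ I := by
  simp only [windmillIdeal, iSup_le_iff, Ideal.span_le, Set.insert_subset_iff,
    Set.singleton_subset_iff, SetLike.mem_coe, Sum.forall]
  grind

lemma X_mul_X_mem_windmillIdeal (j : ι ⊕ ι) : X c * X (v j) ∈ windmillIdeal K c v :=
  (windmillIdeal_le_iff.1 le_rfl).1 j

lemma X_inl_mul_X_inr_mem_windmillIdeal (i : ι) :
    X (v (.inl i)) * X (v (.inr i)) ∈ windmillIdeal K c v :=
  (windmillIdeal_le_iff.1 le_rfl).2 i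

lemma windmillIdeal_colon_X (hc : ∀ j, v j ≠ c) :
    (windmillIdeal K c v).colon {X c} = Ideal.span (Set.range fun j ↦ X (v j)) := by
  refine le_antisymm (fun p hp ↦ ?_) (Ideal.span_le.2 ?_)
  · have le_outer : windmillIdeal K c v ≤ Ideal.span (Set.range fun j ↦ X (v j)) :=
      windmillIdeal_le_iff.2 ⟨fun j ↦ Ideal.mul_mem_left _ _ (Ideal.subset_span ⟨j, rfl⟩),
        fun i ↦ Ideal.mul_mem_left _ _ (Ideal.subset_span ⟨.inr i, rfl⟩)⟩
    have outer_eq : Ideal.span (Set.range fun j ↦ (X (v j) : MvPolynomial σ K)) =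
        Ideal.span ((fun s ↦ monomial s 1) '' Set.range fun j ↦ Finsupp.single (v j) 1) := by
      rw [← Set.range_comp]; rfl
    rw [outer_eq] at le_outer ⊢
    refine mem_span_monomial_of_monomial_mul_mem (d := .single c 1) ?_
      (mul_comm p (X c) ▸ le_outer (Submodule.mem_colon_singleton.1 hp))
    rintro _ ⟨j, rfl⟩
    simp [Finsupp.disjoint_iff, (hc j).symm]
  · rintro _ ⟨j, rfl⟩
    rw [SetLike.mem_coe, Submodule.mem_colon_singleton, smul_eq_mul, mul_comm]
    exact X_mul_X_mem_windmillIdeal j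

lemma windmillIdeal_sup_span_X :
    windmillIdeal K c v ⊔ Ideal.span {X c} = Ideal.span (Set.range fun o : Option ι ↦
      o.elim (X c) fun i ↦ X (v (.inl i)) * X (v (.inr i))) := by
  refine le_antisymm (sup_le (windmillIdeal_le_iff.2 ⟨fun j ↦ ?_, fun i ↦ ?_⟩) ?_) ?_
  · exact Ideal.mul_mem_right _ _ (Ideal.subset_span ⟨none, rfl⟩)
  · exact Ideal.subset_span ⟨some i, rfl⟩
  · exact Ideal.span_mono (Set.singleton_subset_iff.2 ⟨none, rfl⟩)
  · rw [Ideal.span_le]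
    rintro _ ⟨_ | i, rfl⟩
    · exact Ideal.mem_sup_right (Ideal.mem_span_singleton_self _)
    · exact Ideal.mem_sup_left (X_inl_mul_X_inr_mem_windmillIdeal i)

lemma projectiveDimension_quotient_windmillIdeal_sup_span_X [Nontrivial K] [Fintype ι]
    (hv : Function.Injective v) (hc : ∀ j, v j ≠ c) :
    projectiveDimension (ModuleCat.of (MvPolynomial σ K)
      (MvPolynomial σ K ⧸ (windmillIdeal K c v ⊔ Ideal.span {X c}))) =
      (Fintype.card ι + 1 : ℕ) := by
  let d : Option ι → σ →₀ ℕ := fun o ↦ o.elim (.single c 1)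
    fun i ↦ .single (v (.inl i)) 1 + .single (v (.inr i)) 1
  have monomial_d : (fun o ↦ monomial (d o) (1 : K)) = fun o : Option ι ↦
      o.elim (X c) fun i ↦ X (v (.inl i)) * X (v (.inr i)) := by
    ext1 (_ | i) <;> simp [d, X, monomial_mul]
  have disjoint_d : Pairwise (Function.onFun Disjoint d) := by
    classical
    rintro (_ | i) (_ | k) hik <;> have hki := hik.symm <;>
      simp_all [d, Function.onFun, Finsupp.disjoint_iff, Finsupp.support_add_eq_union, hv.eq_iff,
        (hc _).symm]
  have := projectiveDimension_quotient_span_monomial (K := K) disjoint_d (by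
    rintro (_ | i) <;> simp [d])
  rwa [monomial_d, ← windmillIdeal_sup_span_X, Fintype.card_option] at this

lemma projectiveDimension_quotient_windmillIdeal [Nontrivial K] [Fintype ι] [Nonempty ι]
    (hv : Function.Injective v) (hc : ∀ j, v j ≠ c) :
    projectiveDimension (ModuleCat.of (MvPolynomial σ K)
      (MvPolynomial σ K ⧸ windmillIdeal K c v)) = (2 * Fintype.card ι : ℕ) := by
  refine projectiveDimension_quotient_eq_of_colon (f := X c) ?_ ?_
  · rw [windmillIdeal_colon_X hc, projectiveDimension_quotient_span_X hv, Fintype.card_sum,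
      two_mul]
  · rw [projectiveDimension_quotient_windmillIdeal_sup_span_X hv hc]
    have : 0 < Fintype.card ι := Fintype.card_pos
    exact_mod_cast (by lia : Fintype.card ι + 1 ≤ 2 * Fintype.card ι)

lemma projDim_quotient_windmillIdeal {K σ ι : Type} [CommRing K] [Nontrivial K] [Fintype ι]
    [Nonempty ι] {c : σ} {v : ι ⊕ ι → σ} (hv : Function.Injective v) (hc : ∀ j, v j ≠ c) :
    projDim (MvPolynomial σ K) (MvPolynomial σ K ⧸ windmillIdeal K c v) =
      (2 * Fintype.card ι : ℕ) := by
  have pd_eq := projectiveDimension_quotient_windmillIdeal (K := K) hv hc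
  have : Nontrivial (MvPolynomial σ K ⧸ windmillIdeal K c v) := by
    by_contra! trivial_quotient
    rw [(projectiveDimension_eq_bot_iff _).2 (ModuleCat.isZero_of_subsingleton _)] at pd_eq
    exact WithBot.bot_ne_coe pd_eq
  rwa [← coe_projDim, ← WithBot.coe_natCast, WithBot.coe_inj] at pd_eq

end Windmill

section ArithmeticalRank

variable {R S : Type} [CommRing R] [CommRing S] {I : Ideal R}

lemma araRank_le_card {α : Type*} [Fintype α] (f : α → R)
    (hf : (Ideal.span (Set.range f)).radical = I.radical) : araRank I ≤ Fintype.card α :=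
  Nat.sInf_le ⟨f ∘ (Fintype.equivFin α).symm, by rwa [EquivLike.range_comp]⟩

lemma exists_radical_span_range_eq (hI : I.FG) :
    ∃ f : Fin (araRank I) → R, (Ideal.span (Set.range f)).radical = I.radical := by
  obtain ⟨n, f, hf⟩ := Submodule.fg_iff_exists_fin_generating_family.1 hI
  have : {s : ℕ | ∃ f : Fin s → R, (Ideal.span (Set.range f)).radical = I.radical}.Nonempty :=
    ⟨n, f, congrArg Ideal.radical hf⟩
  exact Nat.sInf_mem this

lemma radical_map_congr (φ : R →+* S) {I J : Ideal R} (h : I.radical = J.radical) :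
    (I.map φ).radical = (J.map φ).radical := by
  have map_le {I J : Ideal R} (h : I.radical = J.radical) : I.map φ ≤ (J.map φ).radical :=
    (Ideal.map_mono (Ideal.le_radical.trans h.le)).trans (Ideal.map_radical_le φ)
  exact le_antisymm (Ideal.radical_le_radical_iff.2 (map_le h))
    (Ideal.radical_le_radical_iff.2 (map_le h.symm))

lemma araRank_map_le (φ : R →+* S) (hI : I.FG) : araRank (I.map φ) ≤ araRank I := by
  obtain ⟨f, hf⟩ := exists_radical_span_range_eq hI
  refine (araRank_le_card (φ ∘ f) ?_).trans_eq (Fintype.card_fin _)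
  rw [Set.range_comp, ← Ideal.map_span]
  exact radical_map_congr φ hf

lemma height_le_araRank [IsNoetherianRing R] (hI : I ≠ ⊤) : I.height ≤ araRank I := by
  obtain ⟨f, hf⟩ := exists_radical_span_range_eq (IsNoetherian.noetherian I)
  obtain ⟨p, hp⟩ := Ideal.nonempty_minimalPrimes hI
  have hpf : p ∈ (Ideal.span (Set.range f)).minimalPrimes := by
    rwa [← Ideal.radical_minimalPrimes, hf, Ideal.radical_minimalPrimes]
  calc I.height ≤ p.height := Ideal.height_mono hp.1.2
    _ ≤ (Set.range f).ncard :=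
        Ideal.height_le_card_of_mem_minimalPrimes_span (Set.finite_range f) hpf
    _ ≤ araRank I := Nat.cast_le.2 <|
        (Finite.card_range_le f).trans_eq (Nat.card_fin _)

end ArithmeticalRank

section Height

variable {R : Type*} [CommRing R]

lemma height_add_one_le_height_sup_span {I : Ideal R} {r : R} (hr : IsSMulRegular (R ⧸ I) r) :
    I.height + 1 ≤ (I ⊔ Ideal.span {r}).height := by
  rw [Ideal.height_eq_inf_minimalPrimes (I ⊔ Ideal.span {r})]
  refine le_iInf₂ fun p hp ↦ ?_
  have : p.IsPrime := hp.1.1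
  obtain ⟨hIp, hrp⟩ := sup_le_iff.1 hp.1.2
  obtain ⟨q, hq, hqp⟩ := Ideal.exists_minimalPrimes_le hIp
  have : q.IsPrime := hq.1.1
  have hrq : r ∉ q := hr.notMem_of_mem_minimalPrimes (by rwa [Ideal.annihilator_quotient])
  have hqp : q < p := lt_of_le_of_ne hqp
    (by rintro rfl; exact hrq (hrp (Ideal.mem_span_singleton_self r)))
  exact (add_le_add_left (Ideal.height_mono hq.1.2) 1).trans
    (Ideal.height_add_one_le_of_lt_of_isPrime hqp)

lemma length_le_height_ofList {rs : List R} (h : IsWeaklyRegular R rs) :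
    rs.length ≤ (Ideal.ofList rs).height := by
  induction rs using List.reverseRecOn with
  | nil => simp
  | append_singleton rs r ih =>
    obtain ⟨hrs, hr⟩ := (isWeaklyRegular_append_iff R rs [r]).1 h
    rw [isWeaklyRegular_singleton_iff, smul_eq_mul, Ideal.mul_top] at hr
    rw [Ideal.ofList_append, Ideal.ofList_singleton, List.length_append, List.length_singleton,
      Nat.cast_add, Nat.cast_one]
    exact (add_le_add_left (ih hrs) 1).trans (height_add_one_le_height_sup_span hr)

lemma card_le_height_span_monomial {σ K ι : Type*} [CommRing K] [Fintype ι] {d : ι → σ →₀ ℕ}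
    (hd : Pairwise (Function.onFun Disjoint d)) :
    Fintype.card ι ≤ (Ideal.span (Set.range fun i ↦ monomial (d i) (1 : K))).height := by
  have pairwise : (Finset.univ.toList.map d).Pairwise Disjoint :=
    List.pairwise_map.2 ((Finset.nodup_toList _).imp fun h ↦ hd h)
  have := length_le_height_ofList (isWeaklyRegular_map_monomial (K := K) pairwise)
  rwa [List.map_map, ofList_map_toList_univ, List.length_map, Finset.length_toList] at this

lemma card_le_height_idealOfVars (σ K : Type*) [Fintype σ] [CommRing K] :
    Fintype.card σ ≤ (idealOfVars σ K).height :=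
  card_le_height_span_monomial (d := fun i ↦ Finsupp.single i 1)
    fun i j hij ↦ by simp [Function.onFun, Finsupp.disjoint_iff, hij]

lemma idealOfVars_ne_top {σ K : Type*} [CommRing K] [Nontrivial K] : idealOfVars σ K ≠ ⊤ := by
  rw [Ideal.ne_top_iff_one, ← pow_one (idealOfVars σ K), ← map_one C, C_mem_pow_idealOfVars_iff]
  simp

end Height

section WindmillRank

variable {K : Type*} [CommRing K] {σ ι : Type*} {c : σ} {v : ι ⊕ ι → σ}

lemma fg_windmillIdeal [Finite ι] : (windmillIdeal K c v).FG :=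
  Submodule.fg_iSup _ fun _ ↦ Submodule.fg_span (Set.toFinite _)

lemma map_windmillIdeal_eq_idealOfVars {S : Type*} [CommRing S]
    {φ : MvPolynomial σ K →+* MvPolynomial (ι ⊕ ι) S} (hφc : φ (X c) = 1)
    (hφv : ∀ j, φ (X (v j)) = X j) : (windmillIdeal K c v).map φ = idealOfVars (ι ⊕ ι) S := by
  refine le_antisymm (Ideal.map_le_iff_le_comap.2 (windmillIdeal_le_iff.2 ?_)) (Ideal.span_le.2 ?_)
  · have X_mem (j : ι ⊕ ι) : (X j : MvPolynomial (ι ⊕ ι) S) ∈ idealOfVars (ι ⊕ ι) S :=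
      Ideal.subset_span ⟨j, rfl⟩
    refine ⟨fun j ↦ ?_, fun i ↦ ?_⟩ <;> rw [Ideal.mem_comap, map_mul, hφv]
    · exact Ideal.mul_mem_left _ _ (X_mem j)
    · exact Ideal.mul_mem_right _ _ (X_mem _)
  · rintro _ ⟨j, rfl⟩
    simpa [hφc, hφv] using Ideal.mem_map_of_mem φ (X_mul_X_mem_windmillIdeal (c := c) (v := v) j)

lemma le_araRank_windmillIdeal {K σ ι : Type} [CommRing K] [Nontrivial K] [Fintype ι]
    {c : σ} {v : ι ⊕ ι → σ} (hv : Function.Injective v) (hc : ∀ j, v j ≠ c) :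
    2 * Fintype.card ι ≤ araRank (windmillIdeal K c v) := by
  -- Over a residue field the polynomial ring is Noetherian, as Krull's height theorem requires.
  obtain ⟨m, hm⟩ := Ideal.exists_maximal K
  let _ := Ideal.Quotient.field m
  let φ : MvPolynomial σ K →+* MvPolynomial (ι ⊕ ι) (K ⧸ m) :=
    eval₂Hom (C.comp (Ideal.Quotient.mk m)) (Function.extend v X 1)
  have hφ : (windmillIdeal K c v).map φ = idealOfVars (ι ⊕ ι) (K ⧸ m) :=
    map_windmillIdeal_eq_idealOfVars
      (by simp [φ, Function.extend_apply' _ _ _ fun ⟨j, hj⟩ ↦ hc j hj])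
      (by simp [φ, hv.extend_apply])
  have card_le : Fintype.card (ι ⊕ ι) ≤ araRank (idealOfVars (ι ⊕ ι) (K ⧸ m)) :=
    Nat.cast_le.1 ((card_le_height_idealOfVars _ _).trans (height_le_araRank idealOfVars_ne_top))
  rw [two_mul, ← Fintype.card_sum]
  exact card_le.trans (hφ ▸ araRank_map_le φ fg_windmillIdeal)

lemma mem_radical_of_mul_mem_of_add_mem {R : Type*} [CommRing R] {I : Ideal R} {a b : R}
    (hmul : a * b ∈ I) (hadd : a + b ∈ I) : a ∈ I.radical := by
  refine ⟨2, ?_⟩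
  rw [show a ^ 2 = a * (a + b) - a * b by ring]
  exact sub_mem (Ideal.mul_mem_left _ _ hadd) hmul

lemma radical_windmillIdeal :
    (windmillIdeal K c v).radical = (Ideal.span (Set.range (Sum.elim
      (fun i ↦ X (v (.inl i)) * X (v (.inr i)) : ι → MvPolynomial σ K)
      (fun i ↦ X c * X (v (.inl i)) + X c * X (v (.inr i)))))).radical := by
  set J := Ideal.span (Set.range (Sum.elim
    (fun i ↦ X (v (.inl i)) * X (v (.inr i)) : ι → MvPolynomial σ K)
    (fun i ↦ X c * X (v (.inl i)) + X c * X (v (.inr i)))))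
  have mul_mem_J (i : ι) : X (v (.inl i)) * X (v (.inr i)) ∈ J := Ideal.subset_span ⟨.inl i, rfl⟩
  have add_mem_J (i : ι) : X c * X (v (.inl i)) + X c * X (v (.inr i)) ∈ J :=
    Ideal.subset_span ⟨.inr i, rfl⟩
  have mul_mul_mem_J (i : ι) : X c * X (v (.inl i)) * (X c * X (v (.inr i))) ∈ J := by
    rw [mul_mul_mul_comm]
    exact Ideal.mul_mem_left _ _ (mul_mem_J i)
  refine le_antisymm (Ideal.radical_le_radical_iff.2 (windmillIdeal_le_iff.2
    ⟨?_, fun i ↦ Ideal.le_radical (mul_mem_J i)⟩)) (Ideal.radical_mono (Ideal.span_le.2 ?_))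
  · rintro (i | i)
    · exact mem_radical_of_mul_mem_of_add_mem (mul_mul_mem_J i) (add_mem_J i)
    · exact mem_radical_of_mul_mem_of_add_mem (by simpa only [mul_comm] using mul_mul_mem_J i)
        (by simpa only [add_comm] using add_mem_J i)
  · rintro _ ⟨i | i, rfl⟩
    · exact X_inl_mul_X_inr_mem_windmillIdeal i
    · exact add_mem (X_mul_X_mem_windmillIdeal _) (X_mul_X_mem_windmillIdeal _)

lemma araRank_windmillIdeal {K σ ι : Type} [CommRing K] [Nontrivial K] [Fintype ι]
    {c : σ} {v : ι ⊕ ι → σ} (hv : Function.Injective v) (hc : ∀ j, v j ≠ c) :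
    araRank (windmillIdeal K c v) = 2 * Fintype.card ι := by
  refine le_antisymm ((araRank_le_card _ radical_windmillIdeal.symm).trans_eq ?_)
    (le_araRank_windmillIdeal hv hc)
  rw [Fintype.card_sum, two_mul]

end WindmillRank

lemma twoTrianglesIdeal_eq_windmillIdeal (K : Type) [Field K] :
    twoTrianglesIdeal K = windmillIdeal K 0 (Sum.elim ![1, 3] ![2, 4]) := by
  have X_mul_X_mem := X_mul_X_mem_windmillIdeal (K := K) (c := (0 : Fin 5))
    (v := Sum.elim ![1, 3] ![2, 4])
  have X_inl_mul_X_inr_mem := X_inl_mul_X_inr_mem_windmillIdeal (K := K)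
    (v := Sum.elim ![(1 : Fin 5), 3] ![2, 4]) (c := 0)
  refine le_antisymm (Ideal.span_le.2 ?_) (windmillIdeal_le_iff.2 ⟨?_, ?_⟩)
  · simp only [Set.insert_subset_iff, Set.singleton_subset_iff]
    exact ⟨X_mul_X_mem (.inl 0), X_inl_mul_X_inr_mem 0, X_mul_X_mem (.inr 0),
      X_mul_X_mem (.inl 1), X_inl_mul_X_inr_mem 1, X_mul_X_mem (.inr 1)⟩
  · simp only [Sum.forall, Fin.forall_fin_two]
    refine ⟨⟨?_, ?_⟩, ?_, ?_⟩ <;> exact Ideal.subset_span (by simp)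
  · rw [Fin.forall_fin_two]
    constructor <;> exact Ideal.subset_span (by simp)

theorem two_triangles_pd_and_ara_general {K σ ι : Type} [CommRing K] [Nontrivial K] [Fintype ι]
    [Nonempty ι] {c : σ} {v : ι ⊕ ι → σ} (hv : Function.Injective v) (hc : ∀ j, v j ≠ c) :
    projDim (MvPolynomial σ K) (MvPolynomial σ K ⧸ windmillIdeal K c v) =
        (2 * Fintype.card ι : ℕ) ∧
      araRank (windmillIdeal K c v) = 2 * Fintype.card ι :=
  ⟨projDim_quotient_windmillIdeal hv hc, araRank_windmillIdeal hv hc⟩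

/-- For the edge ideal `I(G)` of two triangles joined at a vertex, the projective
dimension of `R/I(G)` is exactly `4` and the arithmetical rank of `I(G)` is exactly `4`. -/
theorem two_triangles_pd_and_ara (K : Type) [Field K] :
    projDim (MvPolynomial (Fin 5) K) (MvPolynomial (Fin 5) K ⧸ twoTrianglesIdeal K) =
        (4 : ℕ∞) ∧
      araRank (twoTrianglesIdeal K) = 4 := by
  rw [twoTrianglesIdeal_eq_windmillIdeal]
  exact two_triangles_pd_and_ara_general (by decide) (by decide)
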